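/- arXiv:1707.06497 — 2 statements merged into one kernel-verified Lean document; each statement's English description precedes it below -/
import Mathlib

section
/- Suppose the set X of distinct regressor values has exactly m+1 elements, with ordered values x^(0) < x^(1) < ⋯ < x^(m). Then there exist parameters θ, θ_0, …, θ_{m−1} ∈ ℝ such that the piecewise linear model L with split points s_k = x^(k), k = 0, …, m−1, satisfies L(x^(i)) = ȳ_{x^(i)} for all i = 0, …, m; consequently the mean squared error of L on the data equals the lower bound (1/N) ∑_{k=1}^N (y_k − ȳ_{x_k})², i.e. a piecewise linear model of order m with split points in X attains the minimal MSE bound. -/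
open Finset

/-!
The hinge `w ↦ 1{a ≤ w} (w - a)` vanishes on `w ≤ a` and is nonzero on `a < w`. Evaluating the
hinges at the ordered nodes therefore gives a triangular system with nonzero diagonal, which is
solved one node at a time: the slope added at the last split point leaves the values at all earlier
nodes unchanged and can be chosen to produce any value at the last node.
-/

section PiecewiseLinear

variable {K E : Type*} [PartialOrder K] [DecidableLE K] [AddCommGroup E] {m : ℕ}

/-- The piecewise linear model with split points `s`, intercept `θ` and slope increments `θs`,
with values in a `K`-module. The split points are not required to be ordered. -/
def piecewiseLinear [Ring K] [Module K E] (s : Fin m → K) (θ : E) (θs : Fin m → E) (w : K) : E :=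
  θ + ∑ k, if s k ≤ w then (w - s k) • θs k else 0

theorem piecewiseLinear_snoc [Ring K] [Module K E] (s : Fin m → K) (a : K) (θ : E)
    (θs : Fin m → E) (c : E) (w : K) :
    piecewiseLinear (Fin.snoc s a : Fin (m + 1) → K) θ (Fin.snoc θs c : Fin (m + 1) → E) w =
      piecewiseLinear s θ θs w + if a ≤ w then (w - a) • c else 0 := by
  simp only [piecewiseLinear, Fin.sum_univ_castSucc, Fin.snoc_castSucc, Fin.snoc_last, add_assoc]

theorem piecewiseLinear_snoc_of_le [Ring K] [Module K E] (s : Fin m → K) {a w : K} (hwa : w ≤ a)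
    (θ : E) (θs : Fin m → E) (c : E) :
    piecewiseLinear (Fin.snoc s a : Fin (m + 1) → K) θ (Fin.snoc θs c : Fin (m + 1) → E) w =
      piecewiseLinear s θ θs w := by
  have hinge_eq_zero : (if a ≤ w then (w - a) • c else 0) = 0 :=
    ite_eq_right_iff.mpr fun haw => by rw [hwa.antisymm haw, sub_self, zero_smul]
  rw [piecewiseLinear_snoc, hinge_eq_zero, add_zero]

variable [DivisionRing K] [Module K E]

theorem exists_piecewiseLinear_snoc_eq (s : Fin m → K) {a w : K} (haw : a < w) (θ : E)
    (θs : Fin m → E) (v : E) :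
    ∃ c : E, piecewiseLinear (Fin.snoc s a : Fin (m + 1) → K) θ
      (Fin.snoc θs c : Fin (m + 1) → E) w = v := by
  refine ⟨(w - a)⁻¹ • (v - piecewiseLinear s θ θs w), ?_⟩
  rw [piecewiseLinear_snoc, if_pos haw.le, smul_inv_smul₀ (sub_ne_zero.mpr haw.ne'),
    add_sub_cancel]

theorem exists_piecewiseLinear_interpolation {xs : Fin (m + 1) → K} (hxs : StrictMono xs)
    (v : Fin (m + 1) → E) :
    ∃ (θ : E) (θs : Fin m → E), ∀ i, piecewiseLinear (Fin.init xs) θ θs (xs i) = v i := by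
  induction m with
  | zero =>
    refine ⟨v 0, Fin.elim0, fun i => ?_⟩
    rw [Fin.fin_one_eq_zero i, piecewiseLinear, Fin.sum_univ_zero, add_zero]
  | succ m ih =>
    obtain ⟨θ, θs, earlier_nodes⟩ := ih (hxs.comp Fin.strictMono_castSucc) (Fin.init v)
    obtain ⟨c, last_node⟩ := exists_piecewiseLinear_snoc_eq (Fin.init (Fin.init xs))
      (hxs (Fin.castSucc_lt_last (Fin.last m))) θ θs (v (Fin.last (m + 1)))
    have split_points : (Fin.snoc (Fin.init (Fin.init xs)) (xs (Fin.last m).castSucc) :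
        Fin (m + 1) → K) = Fin.init xs := Fin.snoc_init_self (Fin.init xs)
    refine ⟨θ, Fin.snoc θs c, Fin.lastCases ?_ fun i => ?_⟩
    · rwa [split_points] at last_node
    · have node_le_split : xs i.castSucc ≤ xs (Fin.last m).castSucc :=
        hxs.monotone (Fin.castSucc_le_castSucc_iff.mpr i.le_last)
      rw [← split_points, piecewiseLinear_snoc_of_le _ node_le_split]
      exact earlier_nodes i

end PiecewiseLinear

section MeanSquaredError

variable {ι α K : Type*} [Fintype ι] [DivisionRing K]

/-- The mean squared error of `g` on the data `(x k, y k)`, with samples indexed by any finite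
type. It is `0` by convention when `Fintype.card ι` vanishes in `K`, e.g. for no samples. -/
def meanSquaredError (x : ι → α) (y : ι → K) (g : α → K) : K :=
  1 / (Fintype.card ι : K) * ∑ k, (y k - g (x k)) ^ 2

theorem meanSquaredError_congr {x : ι → α} (y : ι → K) {g h : α → K}
    (hgh : Set.EqOn g h (Set.range x)) : meanSquaredError x y g = meanSquaredError x y h := by
  simp only [meanSquaredError, hgh (Set.mem_range_self _)]

theorem piecewise_linear_attains_mse_bound_general [PartialOrder K] [DecidableLE K] (x y : ι → K)
    {m : ℕ} {xs : Fin (m + 1) → K} (hxs : StrictMono xs) (hx : Set.range x ⊆ Set.range xs)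
    (f : K → K) :
    ∃ (θ : K) (θs : Fin m → K),
      (∀ i, piecewiseLinear (Fin.init xs) θ θs (xs i) = f (xs i)) ∧
      meanSquaredError x y (piecewiseLinear (Fin.init xs) θ θs) = meanSquaredError x y f := by
  obtain ⟨θ, θs, interpolates⟩ := exists_piecewiseLinear_interpolation hxs (f ∘ xs)
  have eqOn_nodes : Set.EqOn (piecewiseLinear (Fin.init xs) θ θs) f (Set.range xs) :=
    Set.forall_mem_range.mpr interpolates
  exact ⟨θ, θs, interpolates, meanSquaredError_congr y (eqOn_nodes.mono hx)⟩

end MeanSquaredError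

/-- If the set of distinct regressor values has exactly `m + 1` elements,
with ordered values `xs 0 < xs 1 < ⋯ < xs m`, then there exist parameters
`θ, θ₀, …, θ_{m−1}` such that the piecewise linear model `L` with split points
`s_k = xs k`, `k = 0, …, m − 1`, interpolates the conditional sample means `ȳ` at every
`xs i`; consequently the MSE of `L` on the data equals the lower bound
`(1/N) ∑ₖ (y_k − ȳ_{x_k})²`. -/
theorem piecewise_linear_attains_mse_bound
    (N : ℕ) (hN : 1 ≤ N) (x y : Fin N → ℝ)
    (m : ℕ) (xs : Fin (m + 1) → ℝ) (hxs : StrictMono xs)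
    (hX : Finset.image x Finset.univ = Finset.image xs Finset.univ)
    (ybar : ℝ → ℝ)
    (hybar : ∀ v : ℝ, ybar v =
      (∑ k : Fin N, if x k = v then y k else 0) /
      (∑ k : Fin N, if x k = v then (1 : ℝ) else 0)) :
    ∃ (θ : ℝ) (θs : Fin m → ℝ),
      (∀ i : Fin (m + 1),
        (θ + ∑ k : Fin m,
            if xs k.castSucc ≤ xs i then (xs i - xs k.castSucc) * θs k else 0)
          = ybar (xs i)) ∧
      ((1 : ℝ) / N) * ∑ k : Fin N,
          (y k - (θ + ∑ j : Fin m,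
            if xs j.castSucc ≤ x k then (x k - xs j.castSucc) * θs j else 0)) ^ 2
        = ((1 : ℝ) / N) * ∑ k : Fin N, (y k - ybar (x k)) ^ 2 := by
  have hx : Set.range x ⊆ Set.range xs := by simpa using (congrArg SetLike.coe hX).subset
  obtain ⟨θ, θs, interpolates, mse_eq⟩ :=
    piecewise_linear_attains_mse_bound_general x y hxs hx ybar
  rw [meanSquaredError, meanSquaredError, Fintype.card_fin] at mse_eq
  exact ⟨θ, θs, interpolates, mse_eq⟩
end

section
/- Let x^(0) < x^(1) < ⋯ < x^(m) be m+1 distinct real numbers and let v_0, v_1, …, v_m ∈ ℝ be arbitrary target values. Then there exists a unique parameter vector (θ, θ_0, …, θ_{m−1}) ∈ ℝ^{m+1} such that the piecewise linear model L with split points s_k = x^(k), k = 0, …, m−1, satisfies L(x^(i)) = v_i for all i = 0, …, m. -/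
open Finset

/-!
The parameters enter linearly, so interpolation is a square linear system. Ordering the unknowns as
`θ, θ₀, …, θ_{m-1}`, its matrix is lower triangular, because the `k`-th hinge vanishes at
`x₀, …, x_k` as soon as `x_k ≤ s_k`. Its diagonal entries are `1` and the gaps `x_{k+1} - s_k`, so
it is invertible whenever the split points interlace the nodes, `x_k ≤ s_k < x_{k+1}`; the choice
`s_k = x_k` is the extreme case.
-/

section Hinge

variable {G : Type*} [AddGroup G] [LinearOrder G]

/-- The hinge function `w ↦ 1{s ≤ w} (w - s)`, the nonconstant building block of a piecewise linear
model. It is a case split because `max (w - s) 0` may differ from it when the order on `G` is not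
translation invariant. -/
def hinge (s w : G) : G := if s ≤ w then w - s else 0

theorem hinge_of_le {s w : G} (h : s ≤ w) : hinge s w = w - s := if_pos h

theorem hinge_of_ge {s w : G} (h : w ≤ s) : hinge s w = 0 := by
  rcases h.eq_or_lt with rfl | hlt
  · rw [hinge_of_le le_rfl, sub_self]
  · exact if_neg hlt.not_ge

end Hinge

section Model

variable {R : Type*} [Ring R] [LinearOrder R] {m : ℕ}

/-- The piecewise linear model `L` with split points `s`, evaluated at `w`. The parameter vector
`(θ, θ₀, …, θ_{m-1})` is encoded as the pair `p` of the offset `θ` and the family of `θ_k`. -/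
def piecewiseLinearModel (s : Fin m → R) (p : R × (Fin m → R)) (w : R) : R :=
  p.1 + ∑ k, if s k ≤ w then (w - s k) * p.2 k else 0

/-- The design matrix of the piecewise linear model with split points `s` at the sample points `x`:
column `0` belongs to the offset `θ`, column `k + 1` to the parameter `θ_k`. -/
def hingeMatrix {ι : Type*} (s : Fin m → R) (x : ι → R) : Matrix ι (Fin (m + 1)) R :=
  .of fun i => Fin.cons 1 fun k => hinge (s k) (x i)

theorem hingeMatrix_mulVec_consEquiv {ι : Type*} (s : Fin m → R) (x : ι → R)
    (p : R × (Fin m → R)) :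
    (hingeMatrix s x).mulVec (Fin.consEquiv (fun _ => R) p) =
      fun i => piecewiseLinearModel s p (x i) := by
  funext i
  simp [Matrix.mulVec, dotProduct, Fin.sum_univ_succ, hingeMatrix, piecewiseLinearModel, hinge,
    Fin.consEquiv]

variable {s : Fin m → R} {x : Fin (m + 1) → R}

theorem isLowerTriangular_hingeMatrix (hx : Monotone x) (hs : ∀ k, x k.castSucc ≤ s k) :
    (hingeMatrix s x).IsLowerTriangular := by
  intro i j hij
  have hij : i < j := hij
  cases j using Fin.cases with
  | zero => exact absurd hij (Fin.not_lt_zero i)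
  | succ k => exact hinge_of_ge ((hx (Fin.le_castSucc_iff.mpr hij)).trans (hs k))

end Model

theorem det_hingeMatrix {R : Type*} [CommRing R] [LinearOrder R] {m : ℕ}
    {s : Fin m → R} {x : Fin (m + 1) → R}
    (hs : ∀ k, x k.castSucc ≤ s k) (hs' : ∀ k, s k ≤ x k.succ) :
    (hingeMatrix s x).det = ∏ k, (x k.succ - s k) := by
  have hx : Monotone x := Fin.monotone_iff_le_succ.mpr fun k => (hs k).trans (hs' k)
  rw [Matrix.det_of_isLowerTriangular _ (isLowerTriangular_hingeMatrix hx hs), Fin.prod_univ_succ]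
  simp [hingeMatrix, hinge_of_le (hs' _)]

theorem piecewise_linear_interpolation_existsUnique_general {K : Type*} [Field K] [LinearOrder K]
    {m : ℕ} {s : Fin m → K} {x : Fin (m + 1) → K}
    (hs : ∀ k, x k.castSucc ≤ s k) (hs' : ∀ k, s k < x k.succ) (v : Fin (m + 1) → K) :
    ∃! p : K × (Fin m → K), ∀ i, piecewiseLinearModel s p (x i) = v i := by
  have hdet : IsUnit (hingeMatrix s x).det := by
    rw [det_hingeMatrix hs fun k => (hs' k).le, isUnit_iff_ne_zero, Finset.prod_ne_zero_iff]
    exact fun k _ => sub_ne_zero.mpr (hs' k).ne'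
  have hM : IsUnit (hingeMatrix s x) := (Matrix.isUnit_iff_isUnit_det _).mpr hdet
  have hbij : Function.Bijective (hingeMatrix s x).mulVec :=
    ⟨Matrix.mulVec_injective_iff_isUnit.mpr hM, Matrix.mulVec_surjective_iff_isUnit.mpr hM⟩
  simpa only [Function.comp_apply, hingeMatrix_mulVec_consEquiv, funext_iff] using
    (hbij.comp (Fin.consEquiv fun _ => K).bijective).existsUnique v

/-- Given `m + 1` distinct ordered points `xs 0 < ⋯ < xs m` and arbitrary
target values `v 0, …, v m`, there is a unique parameter vector `(θ, θ₀, …, θ_{m−1})`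
such that the piecewise linear model with split points `s_k = xs k`, `k = 0, …, m − 1`,
takes the value `v i` at `xs i` for every `i`. -/
theorem piecewise_linear_interpolation_existsUnique
    (m : ℕ) (xs : Fin (m + 1) → ℝ) (hxs : StrictMono xs)
    (v : Fin (m + 1) → ℝ) :
    ∃! p : ℝ × (Fin m → ℝ),
      ∀ i : Fin (m + 1),
        (p.1 + ∑ k : Fin m,
            if xs k.castSucc ≤ xs i then (xs i - xs k.castSucc) * p.2 k else 0)
          = v i :=
  piecewise_linear_interpolation_existsUnique_general (fun _ => le_rfl)
    (fun k => hxs k.castSucc_lt_succ) v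
end
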